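/- arXiv:1208.2087 — 8 statements merged into one kernel-verified Lean document; each statement's English description precedes it below -/
import Mathlib

section
/- For every real number s > 0, the quantity t(s) = (T(s) + √(T(s)² − 4))/2 satisfies t(s) > 3, where T(s) = (2 + 3s + 2s² + √(s² + 4))/(2s). -/
open Real Filter Topology

noncomputable def T (s : ℝ) : ℝ := (2 + 3*s + 2*s^2 + Real.sqrt (s^2 + 4)) / (2*s)

noncomputable def t (s : ℝ) : ℝ := (T s + Real.sqrt ((T s)^2 - 4)) / 2

theorem stmt_1 : ∀ s : ℝ, 0 < s → t s > 3 := by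
  intro s hs
  -- `10/3 = 3 + 1/3`, so this is exactly what makes the larger root of `x + 1/x = T s` exceed `3`.
  have hT : 10 / 3 < T s := by
    unfold T
    rw [lt_div_iff₀ (by positivity)]
    nlinarith [sq_nonneg (s - 1), Real.sqrt_nonneg (s^2 + 4)]
  have hroot : 8 / 3 < Real.sqrt ((T s)^2 - 4) := by
    apply Real.lt_sqrt_of_sq_lt
    nlinarith
  unfold t
  linarith
end

section
/- For every real number s > 0 one has t(s) − s > 2, and as s tends to +∞ the difference t(s) − s tends to 2. -/
/-!
`t s` is the larger root of `x + 1/x = T s`. Since `√(s² + 4)` lies strictly between `s` and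
`s + 2`, one has `s + 2 + 1/s < T s ≤ s + 2 + 2/s`. With `u = s + 2`, the first bound gives
`T s > u + 1/u`, hence `√((T s)² - 4) ≥ u - 1/u` and `t s > u`. The second, together with
`t s ≤ T s`, gives `t s - s ≤ 2 + 2/s`, and the limit follows by squeezing.
-/

open Real Filter Topology

lemma T_gt {s : ℝ} (hs : 0 < s) : s + 2 + 1 / (s + 2) < T s := by
  have h1 : s < √(s ^ 2 + 4) := Real.lt_sqrt_of_sq_lt (by linarith)
  have h2 : 1 / (s + 2) < 1 / s := one_div_lt_one_div_of_lt hs (by linarith)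
  have h3 : s + 2 + 1 / s < T s := by
    unfold T
    rw [lt_div_iff₀ (by positivity)]
    have h4 : (s + 2 + 1 / s) * (2 * s) = 2 * s ^ 2 + 4 * s + 2 := by
      field_simp
      ring
    linarith
  linarith

lemma T_le {s : ℝ} (hs : 0 < s) : T s ≤ s + 2 + 2 / s := by
  have h1 : √(s ^ 2 + 4) ≤ s + 2 := Real.sqrt_le_iff.2 ⟨by linarith, by nlinarith⟩
  unfold T
  rw [div_le_iff₀ (by positivity)]
  have h4 : (s + 2 + 2 / s) * (2 * s) = 2 * s ^ 2 + 4 * s + 4 := by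
    field_simp
    ring
  linarith

lemma t_sub_gt {s : ℝ} (hs : 0 < s) : 2 < t s - s := by
  have h := T_gt hs
  have hv : 0 < 1 / (s + 2) := by positivity
  have huv : (s + 2) * (1 / (s + 2)) = 1 := by field_simp
  -- `(u + v)² - 4 = (u - v)²` because `u * v = 1`, where `u = s + 2` and `v = 1 / (s + 2)`
  have h2 : s + 2 - 1 / (s + 2) ≤ √((T s) ^ 2 - 4) := by
    apply Real.le_sqrt_of_sq_le
    nlinarith
  unfold t
  linarith

lemma t_sub_le {s : ℝ} (hs : 0 < s) : t s - s ≤ 2 + 2 / s := by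
  have h := T_le hs
  have hT : 0 ≤ T s := by unfold T; positivity
  have h2 : √((T s) ^ 2 - 4) ≤ T s := Real.sqrt_le_iff.2 ⟨hT, by linarith⟩
  unfold t
  linarith

theorem stmt_5 : (∀ s : ℝ, 0 < s → t s - s > 2) ∧
    Filter.Tendsto (fun s : ℝ => t s - s) Filter.atTop (nhds 2) := by
  refine ⟨fun s hs => t_sub_gt hs, ?_⟩
  have hlim : Tendsto (fun s : ℝ => 2 + 2 / s) atTop (𝓝 2) := by
    simpa using (tendsto_const_nhds (x := (2 : ℝ))).add
      ((tendsto_const_nhds (x := (2 : ℝ))).div_atTop tendsto_id)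
  refine tendsto_of_tendsto_of_tendsto_of_le_of_le' tendsto_const_nhds hlim ?_ ?_
  · filter_upwards [eventually_gt_atTop 0] with s hs using (t_sub_gt hs).le
  · filter_upwards [eventually_gt_atTop 0] with s hs using t_sub_le hs
end

section
/- As s tends to +∞, the quantity s·(t(s) − s − 2) tends to 0. -/
/-!
Since `t s` is a root of `x ^ 2 - T s * x + 1`, one has `t s = T s - 1 / t s`. Moreover
`s ≤ √(s ^ 2 + 4) ≤ s + 2 / s` gives `s + 2 + 1 / s ≤ T s ≤ s + 2 + 1 / s + 1 / s ^ 2`. Hence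
`s * (t s - s - 2)` equals `1 - s / t s` up to an error in `[0, 1 / s]`, and `s ≤ t s ≤ s + 4`
squeezes it between `0` and `5 / s`.
-/

open Real Filter Topology

lemma T_mul_bounds {s : ℝ} (hs : 1 ≤ s) :
    s ^ 2 + 2 * s + 1 ≤ s * T s ∧ s * T s ≤ s ^ 2 + 2 * s + 1 + 1 / s := by
  have hs0 : 0 < s := by linarith
  have hT : s * T s = 1 + 3 / 2 * s + s ^ 2 + √(s ^ 2 + 4) / 2 := by
    unfold T
    field_simp
  have hlow : s ≤ √(s ^ 2 + 4) := Real.le_sqrt_of_sq_le (by linarith)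
  have hup : √(s ^ 2 + 4) ≤ s + 2 * (1 / s) := by
    rw [Real.sqrt_le_left (by positivity)]
    have h : (s + 2 * (1 / s)) ^ 2 = s ^ 2 + 4 + 4 * (1 / s) ^ 2 := by
      field_simp
      ring
    rw [h]
    have := sq_nonneg (1 / s)
    linarith
  constructor <;> linarith

lemma t_mul_sub {s : ℝ} (hT : 2 ≤ T s) : t s * (T s - t s) = 1 := by
  have h := Real.sq_sqrt (show 0 ≤ T s ^ 2 - 4 by nlinarith)
  unfold t
  linarith

lemma stmt_7_bounds {s : ℝ} (hs : 1 ≤ s) :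
    0 ≤ s * (t s - s - 2) ∧ s * (t s - s - 2) ≤ 5 / s := by
  have hs0 : 0 < s := by linarith
  obtain ⟨h1, h2⟩ := T_mul_bounds hs
  have hinv : 1 / s ≤ 1 := by rw [div_le_one hs0]; exact hs
  have hT1 : s + 2 ≤ T s := by nlinarith
  have hT2 : T s ≤ s + 4 := by nlinarith
  have ht1 : s ≤ t s := by
    have : T s - 2 ≤ √(T s ^ 2 - 4) := Real.le_sqrt_of_sq_le (by nlinarith)
    unfold t
    linarith
  have ht0 : 0 < t s := by linarith
  have hm := t_mul_sub (s := s) (by linarith)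
  have heq : T s - t s = 1 / t s := by
    field_simp
    linarith
  have ht2 : t s ≤ s + 4 := by
    have : 0 < 1 / t s := by positivity
    linarith
  have hq1 : s / t s ≤ 1 := by rw [div_le_one ht0]; exact ht1
  have hq2 : 1 - 4 / s ≤ s / t s := by
    rw [le_div_iff₀ ht0, sub_mul, one_mul]
    have : 4 ≤ 4 / s * t s := by
      rw [div_mul_eq_mul_div, le_div_iff₀ hs0]
      linarith
    linarith
  have hf : s * (t s - s - 2) = s * T s - s ^ 2 - 2 * s - s / t s := by
    have h3 : s / t s = s * (T s - t s) := by rw [heq]; ring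
    rw [h3]
    ring
  have h5 : 5 / s = 1 / s + 4 / s := by ring
  rw [hf, h5]
  constructor <;> linarith

theorem stmt_7 : Filter.Tendsto (fun s : ℝ => s * (t s - s - 2)) Filter.atTop (nhds 0) := by
  refine tendsto_of_tendsto_of_tendsto_of_le_of_le' tendsto_const_nhds
    (tendsto_const_nhds.div_atTop tendsto_id : Tendsto (fun s : ℝ => 5 / s) atTop (𝓝 0)) ?_ ?_
  · filter_upwards [eventually_ge_atTop 1] with s hs using (stmt_7_bounds hs).1
  · filter_upwards [eventually_ge_atTop 1] with s hs using (stmt_7_bounds hs).2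
end

section
/- As s tends to +∞, the quantity t(s)·(t(s) − s − 2) tends to 0. -/
/-!
Since `t s` is the larger root of `x² - T s * x + 1 = 0`, the quantity `t * (t - s - 2)` equals
`t * (T - s - 2) - 1`. Writing `e = √(s² + 4) - s ∈ [0, 2 / s]`, one has
`T - s - 2 = (1 + e / 2) / s`, while `T - 1 ≤ t ≤ T` gives `s + 1 ≤ t ≤ s + 4` for `s ≥ 1`.
Hence `0 ≤ t * (t - s - 2) ≤ (1 + 4 / s) * (1 + 1 / s) - 1 ≤ 9 / s`, and the limit follows by
squeezing.
-/

open Real Filter Topology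

lemma t_mul_bounds {s : ℝ} (hs : 1 ≤ s) :
    0 ≤ t s * (t s - s - 2) ∧ t s * (t s - s - 2) ≤ 9 / s := by
  have hs0 : 0 < s := by linarith
  obtain ⟨e, he⟩ : ∃ e, e = √(s ^ 2 + 4) - s := ⟨_, rfl⟩
  have he0 : 0 ≤ e := by
    have : s ≤ √(s ^ 2 + 4) := Real.le_sqrt_of_sq_le (by linarith)
    linarith
  have hes : e * s ≤ 2 := by
    have := Real.sq_sqrt (show 0 ≤ s ^ 2 + 4 by positivity)
    rw [show √(s ^ 2 + 4) = s + e by linarith] at this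
    nlinarith [sq_nonneg e]
  have hT : T s = s + 2 + (1 + e / 2) / s := by
    rw [T, show √(s ^ 2 + 4) = s + e by linarith]
    field_simp
    ring
  obtain ⟨d, hd⟩ : ∃ d, d = (1 + e / 2) / s := ⟨_, rfl⟩
  have hds : d * s = 1 + e / 2 := by rw [hd]; field_simp
  have hd0 : 0 ≤ d := by rw [hd]; positivity
  rw [← hd] at hT
  have hT2 : 2 ≤ T s := by linarith
  have hsq := Real.sq_sqrt (show 0 ≤ T s ^ 2 - 4 by nlinarith)
  have hquad : t s * (t s - s - 2) = t s * d - 1 := by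
    have : t s ^ 2 = T s * t s - 1 := by
      rw [t]
      linear_combination hsq / 4
    rw [hT] at this
    linear_combination this
  have hlow : s + 1 ≤ t s := by
    have : T s - 2 ≤ √(T s ^ 2 - 4) := Real.le_sqrt_of_sq_le (by nlinarith)
    rw [t]
    linarith
  have hup : t s ≤ s + 2 + d := by
    have : √(T s ^ 2 - 4) ≤ T s := Real.sqrt_le_iff.2 ⟨by linarith, by linarith⟩
    rw [t]
    linarith
  have hd2 : d ≤ 2 := by nlinarith
  rw [hquad]
  constructor
  · nlinarith [mul_le_mul_of_nonneg_right hlow hd0]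
  · rw [le_div_iff₀ hs0]
    have h1 : t s * (d * s) ≤ (s + 4) * (d * s) :=
      mul_le_mul_of_nonneg_right (by linarith) (by positivity)
    rw [hds] at h1
    have h2 : t s * d * s = t s * (1 + e / 2) := by rw [mul_assoc, hds]
    have h3 : e ≤ 2 := by nlinarith
    nlinarith

theorem stmt_8 : Filter.Tendsto (fun s : ℝ => t s * (t s - s - 2)) Filter.atTop (nhds 0) := by
  refine tendsto_of_tendsto_of_tendsto_of_le_of_le' tendsto_const_nhds
    (tendsto_const_nhds.div_atTop tendsto_id : Tendsto (fun s : ℝ => 9 / s) atTop (𝓝 0)) ?_ ?_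
  · filter_upwards [eventually_ge_atTop 1] with s hs using (t_mul_bounds hs).1
  · filter_upwards [eventually_ge_atTop 1] with s hs using (t_mul_bounds hs).2
end

section
/- For every real number s > 0, with t = t(s), the 2×2 real matrices X and Y both have determinant 1 (so lie in SL₂(ℝ)), and they satisfy the relation W·X = Y·W, where W = X·Y·X⁻¹·Y⁻¹·X·Y. Hence the correspondence x ↦ X, y ↦ Y defines a representation ρ_s of the knot group ⟨x, y | wx = yw⟩ of the knot 5₂ (with w = xyx⁻¹y⁻¹xy) into SL₂(ℝ). -/
/-!
Write `u = √t`, so that `X` and `Y` are rational in `u` and `s`; moreover `t + 1/t = T`.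
Both determinants are identities of rational functions in `u` and `s`, valid whenever `u ≠ 0` and `u² ≠ 1`.
With adjugates as inverses, `W X - Y W` is, again identically in `u` and `s`, the scalar
`φ = s T² - (2 + 3s + 2s²) T + (3 + 4s + 3s² + s³)` (the Riley polynomial of the knot `5₂`)
times the matrix `!![-s/d, s/d² - 1; -s, s/d]`, where `d = u - 1/u`; see `relation_of_riley`.
The number `T s` is by construction a root of `φ` (`riley_T`), the square root in its definition
being that of the discriminant, and `T s > 2` (`two_lt_T`) gives `t s > 1`.
-/

open Real Filter Topology

noncomputable def X (s : ℝ) : Matrix (Fin 2) (Fin 2) ℝ :=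
  !![Real.sqrt (t s), 0; 0, 1 / Real.sqrt (t s)]

noncomputable def Y (s : ℝ) : Matrix (Fin 2) (Fin 2) ℝ :=
  !![(t s - s - 1) / (Real.sqrt (t s) - 1 / Real.sqrt (t s)),
     s / (Real.sqrt (t s) - 1 / Real.sqrt (t s))^2 - 1;
     -s,
     (s + 1 - 1 / t s) / (Real.sqrt (t s) - 1 / Real.sqrt (t s))]

lemma two_lt_T {s : ℝ} (hs : 0 < s) : 2 < T s := by
  have h : 0 ≤ √(s ^ 2 + 4) := Real.sqrt_nonneg _
  unfold T
  rw [lt_div_iff₀ (by positivity)]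
  nlinarith [sq_nonneg (s - 1)]

lemma riley_T {s : ℝ} (hs : 0 < s) :
    s * T s ^ 2 - (2 + 3 * s + 2 * s ^ 2) * T s + (3 + 4 * s + 3 * s ^ 2 + s ^ 3) = 0 := by
  have hq : √(s ^ 2 + 4) ^ 2 = s ^ 2 + 4 := Real.sq_sqrt (by positivity)
  unfold T
  field_simp
  linear_combination hq

lemma one_lt_t {s : ℝ} (hs : 0 < s) : 1 < t s := by
  have h : 0 ≤ √(T s ^ 2 - 4) := Real.sqrt_nonneg _
  have := two_lt_T hs
  unfold t
  linarith

lemma t_quadratic {s : ℝ} (hs : 0 < s) : t s ^ 2 + 1 = T s * t s := by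
  have hT := two_lt_T hs
  have hq : √(T s ^ 2 - 4) ^ 2 = T s ^ 2 - 4 := Real.sq_sqrt (by nlinarith)
  unfold t
  linear_combination hq / 4

/-- The matrix `Y s` as a function of independent parameters `u` (for `√t`) and `s`, with
`d = u - 1/u` written as `(u² - 1)/u`. -/
noncomputable def genericY (u s : ℝ) : Matrix (Fin 2) (Fin 2) ℝ :=
  !![u * (u ^ 2 - s - 1) / (u ^ 2 - 1), s * u ^ 2 / (u ^ 2 - 1) ^ 2 - 1;
     -s, ((s + 1) * u ^ 2 - 1) / (u * (u ^ 2 - 1))]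

lemma matrix_two_ext {a b c d a' b' c' d' : ℝ} (ha : a = a') (hb : b = b') (hc : c = c')
    (hd : d = d') : (!![a, b; c, d] : Matrix (Fin 2) (Fin 2) ℝ) = !![a', b'; c', d'] := by
  rw [ha, hb, hc, hd]

lemma det_genericY {u s : ℝ} (hu : u ≠ 0) (hd : u ^ 2 - 1 ≠ 0) : (genericY u s).det = 1 := by
  rw [genericY, Matrix.det_fin_two_of]
  field_simp
  ring

/-- Each entry of `W X - Y W` is an explicit multiple of the Riley polynomial, here evaluated at
`T = u² + 1/u²` and cleared of denominators. -/
lemma relation_of_riley {u s : ℝ} (hu : u ≠ 0) (hd : u ^ 2 - 1 ≠ 0)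
    (h : s * (u ^ 4 + 1) ^ 2 - (2 + 3 * s + 2 * s ^ 2) * (u ^ 4 + 1) * u ^ 2
      + (3 + 4 * s + 3 * s ^ 2 + s ^ 3) * u ^ 4 = 0) :
    let A : Matrix (Fin 2) (Fin 2) ℝ := !![u, 0; 0, 1 / u]
    let B := genericY u s
    (A * B * A.adjugate * B.adjugate * A * B) * A
      = B * (A * B * A.adjugate * B.adjugate * A * B) := by
  intro A B
  simp only [A, B, genericY, Matrix.adjugate_fin_two_of, Matrix.mul_fin_two]
  apply matrix_two_ext
  · rw [← sub_eq_zero]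
    trans -s * u / (u ^ 2 - 1) / u ^ 4 * (s * (u ^ 4 + 1) ^ 2
      - (2 + 3 * s + 2 * s ^ 2) * (u ^ 4 + 1) * u ^ 2 + (3 + 4 * s + 3 * s ^ 2 + s ^ 3) * u ^ 4)
    · field_simp
      ring
    · rw [h, mul_zero]
  · rw [← sub_eq_zero]
    trans (s * u ^ 2 / (u ^ 2 - 1) ^ 2 - 1) / u ^ 4 * (s * (u ^ 4 + 1) ^ 2
      - (2 + 3 * s + 2 * s ^ 2) * (u ^ 4 + 1) * u ^ 2 + (3 + 4 * s + 3 * s ^ 2 + s ^ 3) * u ^ 4)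
    · field_simp
      ring
    · rw [h, mul_zero]
  · rw [← sub_eq_zero]
    trans -s / u ^ 4 * (s * (u ^ 4 + 1) ^ 2
      - (2 + 3 * s + 2 * s ^ 2) * (u ^ 4 + 1) * u ^ 2 + (3 + 4 * s + 3 * s ^ 2 + s ^ 3) * u ^ 4)
    · field_simp
      ring
    · rw [h, mul_zero]
  · rw [← sub_eq_zero]
    trans s * u / (u ^ 2 - 1) / u ^ 4 * (s * (u ^ 4 + 1) ^ 2
      - (2 + 3 * s + 2 * s ^ 2) * (u ^ 4 + 1) * u ^ 2 + (3 + 4 * s + 3 * s ^ 2 + s ^ 3) * u ^ 4)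
    · field_simp
      ring
    · rw [h, mul_zero]

theorem stmt_9 : ∀ s : ℝ, 0 < s →
    (X s).det = 1 ∧ (Y s).det = 1 ∧
    (X s * Y s * (X s)⁻¹ * (Y s)⁻¹ * X s * Y s) * X s
      = Y s * (X s * Y s * (X s)⁻¹ * (Y s)⁻¹ * X s * Y s) := by
  intro s hs
  have ht : 1 < t s := one_lt_t hs
  obtain ⟨u, hu⟩ : ∃ u, u = √(t s) := ⟨_, rfl⟩
  have htu : t s = u ^ 2 := by rw [hu, Real.sq_sqrt (by linarith)]
  have hu0 : u ≠ 0 := by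
    rintro rfl
    rw [htu] at ht
    norm_num at ht
  have hd : u ^ 2 - 1 ≠ 0 := by rw [← htu]; linarith
  have hX : X s = !![u, 0; 0, 1 / u] := by rw [X, ← hu]
  have hY : Y s = genericY u s := by
    have hd' : u - 1 / u = (u ^ 2 - 1) / u := by field_simp
    rw [Y, genericY, ← hu, htu, hd']
    apply matrix_two_ext
    · field_simp
    · field_simp
    · rfl
    · field_simp
  have hdX : (X s).det = 1 := by
    rw [hX, Matrix.det_fin_two_of]
    field_simp
    ring
  have hdY : (Y s).det = 1 := by rw [hY, det_genericY hu0 hd]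
  refine ⟨hdX, hdY, ?_⟩
  rw [Matrix.inv_def, Matrix.inv_def, hdX, hdY, Ring.inverse_one, one_smul, one_smul, hX, hY]
  apply relation_of_riley hu0 hd
  have hq : u ^ 4 + 1 = T s * u ^ 2 := by
    have := t_quadratic hs
    rw [htu] at this
    linear_combination this
  rw [hq]
  linear_combination u ^ 4 * riley_T hs
end

section
/- For every real number s > 0, the quantity B(s) = [ s·(1 − (2+s)t + t²)·(s − (2+2s+s²)t + (1+s)t²)² + (1+s−t)²·t³·(s − (1+s)²t + s·t²)² ] / ((t−1)²·t⁵), with t = t(s), is a positive real number. -/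
/-!
Since `t` is the larger root of `t² - T t + 1 = 0`, two factors of the numerator of `B` simplify:
`1 - (2 + s) t + t² = t (T - 2 - s)` and `s - (1 + s)² t + s t² = t (s T - (1 + s)²)`.
As `√(s² + 4) > s`, both are positive, so the numerator is a sum of two nonnegative terms. The
second vanishes only for `t = 1 + s`, and there the remaining factor
`s - (2 + 2s + s²) t + (1 + s) t²` of the first term equals `-1`, so the sum is positive. The
denominator is positive because `T > 2` gives `t > 1`.
-/

open Real Filter Topology

noncomputable def B (s : ℝ) : ℝ :=
  (s * (1 - (2 + s) * t s + (t s)^2) * (s - (2 + 2*s + s^2) * t s + (1 + s) * (t s)^2)^2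
    + (1 + s - t s)^2 * (t s)^3 * (s - (1 + s)^2 * t s + s * (t s)^2)^2)
  / ((t s - 1)^2 * (t s)^5)

theorem stmt_14 : ∀ s : ℝ, 0 < s → 0 < B s := by
  intro s hs
  have hr : s < √(s^2 + 4) := Real.lt_sqrt_of_sq_lt (by linarith)
  have hsT : s * T s = (2 + 3*s + 2*s^2 + √(s^2 + 4)) / 2 := by
    unfold T
    field_simp
  have hT : 2 + s < T s := by
    refine lt_of_mul_lt_mul_left ?_ hs.le
    rw [hsT]
    nlinarith
  have hd : 0 ≤ (T s)^2 - 4 := by nlinarith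
  have ht1 : 1 < t s := by
    unfold t
    linarith [Real.sqrt_nonneg ((T s)^2 - 4)]
  have hquad : (t s)^2 = T s * t s - 1 := by
    have h := Real.sq_sqrt hd
    unfold t
    linear_combination h / 4
  have hA : 0 < 1 - (2 + s) * t s + (t s)^2 := by
    have h : 1 - (2 + s) * t s + (t s)^2 = t s * (T s - (2 + s)) := by
      linear_combination hquad
    rw [h]
    exact mul_pos (by linarith) (by linarith)
  have hP : 0 < s - (1 + s)^2 * t s + s * (t s)^2 := by
    have h : s - (1 + s)^2 * t s + s * (t s)^2 = t s * (s * T s - (1 + s)^2) := by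
      linear_combination s * hquad
    rw [h, hsT]
    exact mul_pos (by linarith) (by nlinarith)
  have ht0 : 0 < t s := by linarith
  have ht1' : 0 < t s - 1 := by linarith
  unfold B
  refine div_pos ?_ (by positivity)
  by_cases hc : 1 + s - t s = 0
  · have hQ : s - (2 + 2*s + s^2) * t s + (1 + s) * (t s)^2 = -1 := by
      have h : t s = 1 + s := by linarith
      rw [h]
      ring
    rw [hQ, hc]
    have := mul_pos hs hA
    linarith
  · have : 0 < (1 + s - t s)^2 := by positivity
    exact add_pos_of_nonneg_of_pos (by positivity) (by positivity)
end

section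
/- As s tends to 0 from the right, B(s) tends to 1. -/
open Real Filter Topology

/-- The continuous extension of `s * t s` to `s = 0`, obtained by multiplying the formulas for
`T s` and `t s` through by `s`. -/
noncomputable def scaledRoot (s : ℝ) : ℝ :=
  ((2 + 3*s + 2*s^2 + Real.sqrt (s^2 + 4)) / 2
    + Real.sqrt (((2 + 3*s + 2*s^2 + Real.sqrt (s^2 + 4)) / 2)^2 - 4*s^2)) / 2

lemma continuous_scaledRoot : Continuous scaledRoot := by
  unfold scaledRoot
  fun_prop

lemma scaledRoot_zero : scaledRoot 0 = 2 := by
  have h4 : Real.sqrt 4 = 2 := by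
    rw [show (4 : ℝ) = 2 ^ 2 by norm_num]
    exact Real.sqrt_sq (by norm_num)
  have h : ((2 : ℝ) + 2) / 2 = 2 := by norm_num
  simp [scaledRoot, h4, h]

lemma scaledRoot_pos {s : ℝ} (hs : 0 < s) : 0 < scaledRoot s := by
  unfold scaledRoot
  positivity

lemma t_eq {s : ℝ} (hs : 0 < s) : t s = scaledRoot s / s := by
  have hT : T s = ((2 + 3*s + 2*s^2 + Real.sqrt (s^2 + 4)) / 2) / s := by
    unfold T
    field_simp
  unfold t scaledRoot
  rw [hT]
  set P := (2 + 3*s + 2*s^2 + Real.sqrt (s^2 + 4)) / 2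
  have h : (P / s)^2 - 4 = (P^2 - 4*s^2) / s^2 := by
    field_simp
  rw [h, Real.sqrt_div' _ (sq_nonneg s), Real.sqrt_sq hs.le]
  ring

/-- The quotient defining `B`, with numerator and denominator divided by `t ^ 7`; here `u` stands
for `t⁻¹` and `w` for `s * t`. -/
noncomputable def reducedB (s u w : ℝ) : ℝ :=
  (s * u * (u^2 - (2 + s) * u + 1) * (s * u^2 - (2 + 2*s + s^2) * u + (1 + s))^2
    + ((1 + s) * u - 1)^2 * (s * u - (1 + s)^2 + w)^2) / (1 - u)^2

lemma B_eq {s : ℝ} (hs : 0 < s) : B s = reducedB s (s / scaledRoot s) (scaledRoot s) := by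
  have hw := scaledRoot_pos hs
  have hu : s / scaledRoot s = (t s)⁻¹ := by rw [t_eq hs, inv_div]
  have hst : scaledRoot s = s * t s := by
    rw [t_eq hs]
    field_simp
  have ht : t s ≠ 0 := by
    rw [t_eq hs]
    positivity
  rw [hu, hst]
  unfold B reducedB
  generalize t s = x at ht
  rw [← mul_div_mul_right _ ((1 - x⁻¹)^2) (pow_ne_zero 7 ht)]
  congr 1
  · field_simp
  · field_simp

theorem stmt_15 : Filter.Tendsto B (nhdsWithin 0 (Set.Ioi 0)) (nhds 1) := by
  have hcont : ContinuousAt (fun s => reducedB s (s / scaledRoot s) (scaledRoot s)) 0 := by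
    have hw : ContinuousAt scaledRoot 0 := continuous_scaledRoot.continuousAt
    have hu : ContinuousAt (fun s => s / scaledRoot s) 0 :=
      continuousAt_id.div hw (by rw [scaledRoot_zero]; norm_num)
    unfold reducedB
    refine ContinuousAt.div (by fun_prop) (by fun_prop) ?_
    norm_num
  have hlim := hcont.tendsto
  have hval : reducedB 0 (0 / scaledRoot 0) (scaledRoot 0) = 1 := by
    rw [scaledRoot_zero]
    norm_num [reducedB]
  rw [hval] at hlim
  refine (hlim.mono_left nhdsWithin_le_nhds).congr' ?_
  filter_upwards [self_mem_nhdsWithin] with s hs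
  exact (B_eq hs).symm
end

section
/- As s tends to 0 from the right, the function g(s) = −log B(s) / log √(t(s)) tends to 0. -/
/-!
As `s → 0⁺` we have `s * T s → 2`, hence `s * t s → 2`, and so `t s → ∞`.
Dividing the numerator and denominator of `B s` by `(t s)^7` writes `B s` as a continuous
expression in `s`, `(t s)⁻¹` and `s * t s`, whose value at `(0, 0, 2)` is `1`.
Therefore `log (B s) → 0` while `log √(t s) → ∞`, and the quotient tends to `0`.
-/

open Real Filter Topology

noncomputable def g (s : ℝ) : ℝ := - Real.log (B s) / Real.log (Real.sqrt (t s))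

lemma tendsto_mul_t : Tendsto (fun s => s * t s) (𝓝[>] 0) (𝓝 2) := by
  have hcont : Continuous (fun s : ℝ => ((2 + 3*s + 2*s^2 + √(s^2 + 4)) / 2
      + √(((2 + 3*s + 2*s^2 + √(s^2 + 4)) / 2)^2 - 4 * s^2)) / 2) := by
    fun_prop
  have h4 : √(4 : ℝ) = 2 := by
    rw [show (4 : ℝ) = 2^2 by norm_num]
    exact Real.sqrt_sq (by norm_num)
  have h0 := (hcont.tendsto 0).mono_left (nhdsWithin_le_nhds (s := Set.Ioi 0))
  norm_num [h4] at h0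
  refine h0.congr' ?_
  filter_upwards [self_mem_nhdsWithin] with s hs
  have hs : 0 < s := hs
  have hT : (2 + 3*s + 2*s^2 + √(s^2 + 4)) / 2 = s * T s := by
    unfold T
    field_simp
  have hsq : √((s * T s)^2 - 4 * s^2) = s * √((T s)^2 - 4) := by
    rw [show (s * T s)^2 - 4 * s^2 = s^2 * ((T s)^2 - 4) by ring,
      Real.sqrt_mul (sq_nonneg s), Real.sqrt_sq hs.le]
  rw [hT, hsq]
  unfold t
  ring

lemma tendsto_t_atTop : Tendsto t (𝓝[>] 0) atTop := by
  refine (tendsto_mul_t.pos_mul_atTop (by norm_num) tendsto_inv_nhdsGT_zero).congr' ?_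
  filter_upwards [self_mem_nhdsWithin] with s hs
  have hs : s ≠ 0 := ne_of_gt hs
  field_simp

lemma tendsto_B : Tendsto B (𝓝[>] 0) (𝓝 1) := by
  have hs : Tendsto (fun s : ℝ => s) (𝓝[>] 0) (𝓝 0) := tendsto_nhdsWithin_of_tendsto_nhds tendsto_id
  have hu : Tendsto (fun s => (t s)⁻¹) (𝓝[>] 0) (𝓝 0) := tendsto_inv_atTop_zero.comp tendsto_t_atTop
  -- `B s` in terms of `x.1 = s`, `x.2.1 = (t s)⁻¹`, `x.2.2 = s * t s`.
  have hcont : ContinuousAt (fun x : ℝ × ℝ × ℝ =>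
      (x.1 * (x.2.1^2 - (2 + x.1) * x.2.1 + 1)
          * (x.1 * x.2.1^2 - (2 + 2*x.1 + x.1^2) * x.2.1 + (1 + x.1))^2 * x.2.1
        + ((1 + x.1) * x.2.1 - 1)^2 * (x.1 * x.2.1 - (1 + x.1)^2 + x.2.2)^2)
      / (1 - x.2.1)^2) (0, 0, 2) := by
    refine ContinuousAt.div (by fun_prop) (by fun_prop) (by norm_num)
  have h := hcont.tendsto.comp (hs.prodMk_nhds (hu.prodMk_nhds tendsto_mul_t))
  norm_num at h
  refine h.congr' ?_
  filter_upwards [tendsto_t_atTop.eventually_gt_atTop 1] with s ht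
  have h0 : t s ≠ 0 := by positivity
  have h1 : t s - 1 ≠ 0 := by linarith
  have h2 : 1 - (t s)⁻¹ ≠ 0 := by
    rw [show 1 - (t s)⁻¹ = (t s - 1) / t s by field_simp]
    exact div_ne_zero h1 h0
  simp only [Function.comp_apply]
  unfold B
  rw [div_eq_div_iff (by positivity) (by positivity)]
  field_simp

theorem stmt_17 : Filter.Tendsto g (nhdsWithin 0 (Set.Ioi 0)) (nhds 0) := by
  have hlog : Tendsto (fun s => -Real.log (B s)) (𝓝[>] 0) (𝓝 0) := by
    simpa using (tendsto_B.log one_ne_zero).neg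
  exact hlog.div_atTop
    (Real.tendsto_log_atTop.comp (Real.tendsto_sqrt_atTop.comp tendsto_t_atTop))
end
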